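/- Let k, ℓ, b, n be integers with k ≥ 1, 1 ≤ ℓ ≤ k, b ∈ {0,1}, and n ≥ b. Then, as an identity of Laurent polynomials in q (equivalently, for every q ∈ ℂ with q ≠ 0, where each Gaussian polynomial is evaluated as a polynomial in its argument), H_n(k,ℓ;b;q^{−1}) = q^{(k−1)bn − (k−1)n(n+1)} · G_{k−1,ℓ,k,2n−b+1}(q). -/

import Mathlib

noncomputable section
open Classical

/-- The Gaussian binomial coefficient `[n choose r]_q` as a polynomial in `q` with integer
coefficients, defined by the q-Pascal recursion
`[n+1 choose r+1] = [n choose r+1] + q^{n-r} [n choose r]`, `[n choose 0] = 1`,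
`[0 choose r+1] = 0`. -/
def qbinom : ℕ → ℕ → Polynomial ℤ
  | _, 0 => 1
  | 0, _ + 1 => 0
  | n + 1, r + 1 => qbinom n (r + 1) + Polynomial.X ^ (n - r) * qbinom n r

/-- The Gaussian polynomial `[m choose r]_q` with integer arguments, evaluated at `q ∈ ℂ`:
it is `[m choose r]_q` if `0 ≤ r ≤ m`, and `0` otherwise. -/
def gaussP (q : ℂ) (m r : ℤ) : ℂ :=
  if 0 ≤ r ∧ r ≤ m then ((qbinom m.toNat r.toNat).map (Int.castRingHom ℂ)).eval q else 0

/-- Accessor for a chain `0 = n_0 ≤ n_1 ≤ ⋯ ≤ n_{k-1} ≤ n_k = n` encoded by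
`f : Fin (k-1) → Fin (n+1)` (the values `n_1, …, n_{k-1}`). -/
def chainN (k n : ℕ) (f : Fin (k - 1) → Fin (n + 1)) (j : ℕ) : ℕ :=
  if h : 1 ≤ j ∧ j ≤ k - 1 then (f ⟨j - 1, by omega⟩ : ℕ)
  else if j = 0 then 0 else n

/-- The polynomial `H_n(k,ℓ;b;q)`: the sum over chains `n = n_k ≥ n_{k-1} ≥ ⋯ ≥ n_1 ≥ 0` of
`∏_{j=1}^{k-1} q^{n_j² + (1-b) n_j} [n_{j+1} - n_j - bj + Σ_{r=1}^j (2 n_r + χ_{ℓ>r}) choose n_{j+1} - n_j]_q`. -/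
def HpolyP (k ℓ b : ℕ) (q : ℂ) (n : ℕ) : ℂ :=
  ∑ f ∈ Finset.univ.filter
      (fun f : Fin (k - 1) → Fin (n + 1) => ∀ i j, i ≤ j → f i ≤ f j),
    ∏ j ∈ Finset.Icc 1 (k - 1),
      q ^ (chainN k n f j ^ 2 + (1 - b) * chainN k n f j) *
        gaussP q
          ((chainN k n f (j + 1) : ℤ) - (chainN k n f j : ℤ) - (b : ℤ) * (j : ℤ)
            + ∑ r ∈ Finset.Icc 1 j, (2 * (chainN k n f r : ℤ) + if r < ℓ then 1 else 0))
          ((chainN k n f (j + 1) : ℤ) - (chainN k n f j : ℤ))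

/-- Accessor for a frequency tuple `(f_1, …, f_{L-1})` encoded by `g : Fin (L-1) → Fin B`
(value `0` outside the index range `1 ≤ j ≤ L-1`). -/
def fval (L B : ℕ) (g : Fin (L - 1) → Fin B) (j : ℕ) : ℕ :=
  if h : 1 ≤ j ∧ j ≤ L - 1 then (g ⟨j - 1, by omega⟩ : ℕ) else 0

/-- The generating function `G_{k,i,i',L}(q)` for partitions `Σ_{j=1}^{L-1} j·f_j` with
frequencies satisfying `f_1 ≤ i-1`, `f_{L-1} ≤ i'-1`, and `f_j + f_{j+1} ≤ k` for
`1 ≤ j ≤ L-2`. (All such frequencies are bounded by `k + i + i'`.) -/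
def Gpoly (k i i' L : ℕ) (q : ℂ) : ℂ :=
  ∑ g ∈ Finset.univ.filter
      (fun g : Fin (L - 1) → Fin (k + i + i') =>
        fval L (k + i + i') g 1 ≤ i - 1 ∧ fval L (k + i + i') g (L - 1) ≤ i' - 1 ∧
          ∀ j ∈ Finset.Icc 1 (L - 2),
            fval L (k + i + i') g j + fval L (k + i + i') g (j + 1) ≤ k),
    q ^ (∑ j ∈ Finset.Icc 1 (L - 1), j * fval L (k + i + i') g j)


/-! ### Normalised Gaussian coefficients at `q⁻¹` -/

def gg (q : ℂ) (m : ℤ) (n : ℕ) : ℂ := q ^ ((n : ℤ) * m) * gaussP q⁻¹ ((n : ℤ) + m) n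

lemma gg_neg (q : ℂ) {m : ℤ} (hm : m < 0) (n : ℕ) : gg q m n = 0 := by
  unfold gg gaussP
  rw [if_neg (by omega)]
  simp

lemma gg_zero (q : ℂ) {m : ℤ} (hm : 0 ≤ m) : gg q m 0 = 1 := by
  unfold gg gaussP
  rw [if_pos (by constructor <;> simp [hm])]
  simp [qbinom]

lemma qbinom_gt : ∀ n r : ℕ, n < r → qbinom n r = 0
  | 0, 0, h => by omega
  | n + 1, 0, h => by omega
  | 0, r + 1, _ => by simp [qbinom]
  | n + 1, r + 1, h => by
    rw [qbinom, qbinom_gt n (r + 1) (by omega), qbinom_gt n r (by omega)]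
    simp

lemma qbinom_self : ∀ n : ℕ, qbinom n n = 1
  | 0 => by simp [qbinom]
  | n + 1 => by
    rw [qbinom, qbinom_gt n (n + 1) (by omega), qbinom_self n]
    simp

lemma gaussP_nat (q : ℂ) (m r : ℕ) (h : r ≤ m) :
    gaussP q (m : ℤ) (r : ℤ) = ((qbinom m r).map (Int.castRingHom ℂ)).eval q := by
  unfold gaussP
  rw [if_pos (by constructor <;> omega)]
  simp

lemma gg_pascal (q : ℂ) (hq : q ≠ 0) (m : ℤ) (n : ℕ) :
    gg q m (n + 1) = q ^ ((n : ℤ) + 1) * gg q (m - 1) (n + 1) + gg q m n := by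
  rcases lt_or_ge m 0 with hm | hm
  · rw [gg_neg q hm, gg_neg q hm, gg_neg q (by omega)]; simp
  · obtain ⟨s, rfl⟩ := Int.eq_ofNat_of_zero_le hm
    rcases s with _ | s
    · rw [gg_neg q (m := ((0 : ℕ) : ℤ) - 1) (by simp)]
      have h1 := gaussP_nat q⁻¹ (n + 1) (n + 1) le_rfl
      have h2 := gaussP_nat q⁻¹ n n le_rfl
      rw [qbinom_self] at h1 h2
      unfold gg
      simp at h1 h2 ⊢
      rw [h1, h2]
    · have h0 := gaussP_nat q⁻¹ (n + s + 2) (n + 1) (by omega)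
      have h1 := gaussP_nat q⁻¹ (n + s + 1) (n + 1) (by omega)
      have h2 := gaussP_nat q⁻¹ (n + s + 1) n (by omega)
      rw [qbinom] at h0
      unfold gg
      have e0 : (((n + 1 : ℕ) : ℤ) + ((s + 1 : ℕ) : ℤ)) = ((n + s + 2 : ℕ) : ℤ) := by
        push_cast; ring
      have e1 : (((n + 1 : ℕ) : ℤ) + (((s + 1 : ℕ) : ℤ) - 1)) = ((n + s + 1 : ℕ) : ℤ) := by
        push_cast; ring
      have e2 : ((n : ℤ) + ((s + 1 : ℕ) : ℤ)) = ((n + s + 1 : ℕ) : ℤ) := by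
        push_cast; ring
      rw [e0, e1, e2, h0, h1, h2]
      have e3 : n + s + 1 - n = s + 1 := by omega
      rw [e3]
      simp only [Polynomial.map_add, Polynomial.map_mul, Polynomial.map_pow, Polynomial.map_X,
        Polynomial.eval_add, Polynomial.eval_mul, Polynomial.eval_pow, Polynomial.eval_X]
      rw [mul_add]
      congr 1
      · rw [← mul_assoc, ← zpow_add₀ hq]
        congr 2
        push_cast; ring
      · rw [← mul_assoc]
        congr 1
        rw [inv_pow, ← zpow_natCast, ← zpow_neg, ← zpow_add₀ hq]
        congr 1
        push_cast; ring

lemma gg_pascal0 (q : ℂ) {m : ℤ} (hm : m ≠ 0) : gg q m 0 = gg q (m - 1) 0 := by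
  rcases lt_or_ge m 0 with h | h
  · rw [gg_neg q h, gg_neg q (by omega)]
  · rw [gg_zero q h, gg_zero q (by omega)]

/-! ### The fermionic side, refined by the number of parts -/

def ZZ (q : ℂ) : ℕ → ℤ → ℤ → ℤ → ℂ
  | 0, l, M, P => if P = 0 ∧ -1 ≤ M ∧ 1 ≤ l then 1 else 0
  | K + 1, l, M, P => ∑ n ∈ Finset.range (P.toNat + 1),
      q ^ (2 * (n : ℤ) * P - ((K : ℤ) + 1) * (n : ℤ) ^ 2 + ((K : ℤ) + 2 - l) * n) *
        ZZ q K (min l ((K : ℤ) + 1)) (M - 2 * n) (P - ((K : ℤ) + 1) * n) *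
        gg q (((K : ℤ) + 1) * M - 2 * P + l - 1) n

lemma ZZ_negP (q : ℂ) : ∀ (K : ℕ) (l M P : ℤ), P < 0 → ZZ q K l M P = 0
  | 0, l, M, P, h => by
    rw [ZZ, if_neg (by omega)]
  | K + 1, l, M, P, h => by
    rw [ZZ]
    apply Finset.sum_eq_zero
    intro n _
    rw [ZZ_negP q K _ _ _ (by nlinarith)]
    simp

lemma ZZ_range (q : ℂ) (K : ℕ) (l M P : ℤ) (N : ℕ) (hN : P < N) :
    ZZ q (K + 1) l M P = ∑ n ∈ Finset.range N,
      q ^ (2 * (n : ℤ) * P - ((K : ℤ) + 1) * (n : ℤ) ^ 2 + ((K : ℤ) + 2 - l) * n) *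
        ZZ q K (min l ((K : ℤ) + 1)) (M - 2 * n) (P - ((K : ℤ) + 1) * n) *
        gg q (((K : ℤ) + 1) * M - 2 * P + l - 1) n := by
  rcases lt_or_ge P 0 with h | h
  · rw [ZZ_negP q _ _ _ _ h]
    symm
    apply Finset.sum_eq_zero
    intro n _
    rw [ZZ_negP q K _ _ _ (by nlinarith)]
    simp
  · rw [ZZ]
    apply Finset.sum_subset
    · intro x hx
      simp only [Finset.mem_range] at *
      omega
    · intro x _ hx
      simp only [Finset.mem_range] at hx
      have : P < x := by omega
      rw [ZZ_negP q K _ _ _ (by nlinarith)]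
      simp

lemma ZZ_negM (q : ℂ) : ∀ (K : ℕ) (l M P : ℤ), M < -1 → ZZ q K l M P = 0
  | 0, l, M, P, h => by
    rw [ZZ, if_neg (by omega)]
  | K + 1, l, M, P, h => by
    rw [ZZ]
    apply Finset.sum_eq_zero
    intro n _
    rw [ZZ_negM q K _ _ _ (by omega)]
    simp

lemma ZZ_l0 (q : ℂ) : ∀ (K : ℕ) (M P : ℤ), ZZ q K 0 M P = 0
  | 0, M, P => by
    rw [ZZ, if_neg (by omega)]
  | K + 1, M, P => by
    rw [ZZ]
    apply Finset.sum_eq_zero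
    intro n _
    rw [min_eq_left (by positivity), ZZ_l0 q K]
    simp

lemma ZZ_big (q : ℂ) : ∀ (K : ℕ) (l M P : ℤ), (K : ℤ) * M + l - 1 < 2 * P → ZZ q K l M P = 0
  | 0, l, M, P, h => by
    simp at h
    rw [ZZ, if_neg (by omega)]
  | K + 1, l, M, P, h => by
    rw [ZZ]
    apply Finset.sum_eq_zero
    intro n _
    rw [gg_neg q (by push_cast at h; linarith)]
    simp

lemma ZZ_first (q : ℂ) (K : ℕ) (l M P : ℤ) (hM : M < 1) :
    ZZ q (K + 1) l M P =
      ZZ q K (min l ((K : ℤ) + 1)) M P * gg q (((K : ℤ) + 1) * M - 2 * P + l - 1) 0 := by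
  rw [ZZ, Finset.sum_eq_single 0]
  · simp
  · intro n _ hn
    rw [ZZ_negM q K _ _ _ (by omega)]
    simp
  · simp

lemma ZZ_M0 (q : ℂ) : ∀ (K : ℕ) (l P : ℤ), 1 ≤ l →
    ZZ q K l 0 P = if P = 0 then 1 else 0
  | 0, l, P, h => by
    rw [ZZ]; simp [h]
  | K + 1, l, P, h => by
    rw [ZZ_first q K l 0 P (by omega), ZZ_M0 q K _ _ (by omega)]
    split_ifs with hP
    · subst hP
      rw [gg_zero q (by omega)]; simp
    · simp

lemma ZZ_Mneg1 (q : ℂ) : ∀ (K : ℕ) (l P : ℤ), l ≤ K + 1 →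
    ZZ q K l (-1) P = if P = 0 ∧ l = K + 1 then 1 else 0
  | 0, l, P, h => by
    rw [ZZ]
    congr 1
    simp at h ⊢
    omega
  | K + 1, l, P, h => by
    push_cast at h
    rw [ZZ_first q K l (-1) P (by omega), ZZ_Mneg1 q K _ _ (by omega)]
    push_cast
    by_cases hP : P = 0
    · subst hP
      by_cases hl : l = K + 1 + 1
      · subst hl
        rw [gg_zero q (by omega)]; simp
      · rw [gg_neg q (by omega)]; simp [hl]
    · simp [hP]

def ZRec (q : ℂ) (K : ℕ) (l M P : ℤ) : Prop :=
  ZZ q K l M P = ZZ q K (l - 1) M P + q ^ P * ZZ q K (K + 2 - l) (M - 1) (P - l + 1)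

lemma ZRec_ext (q : ℂ) (K : ℕ)
    (h : ∀ l M P : ℤ, 1 ≤ l → l ≤ K + 1 → 1 ≤ M → ZRec q K l M P)
    (l M P : ℤ) (h1 : 1 ≤ l) (h2 : l ≤ K + 1) (h3 : ¬ (M = -1 ∧ P = 0)) : ZRec q K l M P := by
  rcases lt_or_ge M 1 with hM | hM
  · rcases lt_or_ge M (-1) with hM' | hM'
    · unfold ZRec
      rw [ZZ_negM q K _ _ _ hM', ZZ_negM q K _ _ _ hM', ZZ_negM q K _ _ _ (by omega)]
      simp
    · have : M = -1 ∨ M = 0 := by omega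
      rcases this with rfl | rfl
      · have hP : P ≠ 0 := by tauto
        unfold ZRec
        rw [ZZ_Mneg1 q K _ _ h2, ZZ_Mneg1 q K _ _ (by omega), ZZ_negM q K _ _ _ (by omega)]
        simp [hP]
      · unfold ZRec
        rw [ZZ_M0 q K _ _ h1]
        simp only [zero_sub]
        rw [ZZ_Mneg1 q K _ _ (by omega)]
        by_cases hl : l = 1
        · subst hl
          simp only [sub_self]
          rw [ZZ_l0]
          by_cases hP : P = 0
          · subst hP
            simp
            ring
          · simp [hP]
        · rw [ZZ_M0 q K _ _ (by omega)]
          rw [if_neg (c := P - l + 1 = 0 ∧ _) (by omega)]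
          simp
  · exact h l M P h1 h2 hM

lemma ZRec_step (q : ℂ) (hq : q ≠ 0) (K : ℕ)
    (ih : ∀ l M P : ℤ, 1 ≤ l → l ≤ K + 1 → 1 ≤ M → ZRec q K l M P)
    (l M P : ℤ) (h1 : 1 ≤ l) (h2 : l ≤ (K : ℤ) + 2) (hM : 1 ≤ M) : ZRec q (K + 1) l M P := by
  have ext := ZRec_ext q K ih
  unfold ZRec
  obtain ⟨N, hN⟩ : ∃ N : ℕ, P < N := ⟨P.toNat + 1, by omega⟩
  have hN1 : P - l + 1 < N := by omega
  rw [ZZ_range q K l M P N hN, ZZ_range q K (l - 1) M P N hN, ZZ_range q K _ _ _ N hN1]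
  push_cast
  set k : ℤ := (K : ℤ) + 1 with hk
  have hk2 : (K : ℤ) + 2 = k + 1 := by omega
  rw [hk2] at *
  have hk3 : (K : ℤ) + 2 = k + 1 := by omega
  have hkpos : 1 ≤ k := by omega
  set m : ℤ := k * M - 2 * P + l - 1 with hm
  have hm1 : k * M - 2 * P + (l - 1) - 1 = m - 1 := by rw [hm]; ring
  have hm2 : k * (M - 1) - 2 * (P - l + 1) + (k + 2 - l) - 1 = m := by rw [hm]; ring
  have e1 : min (l - 1) k = l - 1 := min_eq_left (by omega)
  rw [hm1, hm2, e1]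
  set t : ℕ → ℂ := fun n => q ^ (2 * (n : ℤ) * P - k * (n : ℤ) ^ 2 + (k + 1 - l) * n) *
    ZZ q K (l - 1) (M - 2 * n) (P - k * n) * (if n = 0 then 0 else gg q m (n - 1)) with ht
  have key : ∀ n : ℕ,
      q ^ (2 * (n : ℤ) * P - k * (n : ℤ) ^ 2 + (k + 1 - l) * n) *
        ZZ q K (min l k) (M - 2 * n) (P - k * n) * gg q m n
      - q ^ (2 * (n : ℤ) * P - k * (n : ℤ) ^ 2 + (k + 1 - (l - 1)) * n) *
        ZZ q K (l - 1) (M - 2 * n) (P - k * n) * gg q (m - 1) n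
      - q ^ P * (q ^ (2 * (n : ℤ) * (P - l + 1) - k * (n : ℤ) ^ 2 + (k + 1 - (k + 2 - l)) * n) *
        ZZ q K (min (k + 2 - l) k) (M - 1 - 2 * n) (P - l + 1 - k * n) * gg q m n)
      = t n - t (n + 1) := by
    intro n
    rcases lt_or_ge m 0 with hneg | hpos
    · rw [ht]
      simp only [gg_neg q hneg, gg_neg q (show m - 1 < 0 by omega)]
      simp
    · have hA : ZZ q K (min l k) (M - 2 * n) (P - k * n) =
          ZZ q K (l - 1) (M - 2 * n) (P - k * n) +
          q ^ (P - k * n) * ZZ q K (k + 1 - l) (M - 1 - 2 * n) (P - l + 1 - k * n) := by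
        by_cases hl : l = k + 1
        · subst hl
          rw [min_eq_right (by omega)]
          simp [ZZ_l0]
        · rw [min_eq_left (by omega)]
          have := ext l (M - 2 * n) (P - k * n) h1 (by omega) (by
            rintro ⟨ha, hb⟩
            have : m = -k + l - 1 := by
              rw [hm]; linear_combination k * ha - 2 * hb
            omega)
          unfold ZRec at this
          rw [this, hk3]
          congr 3
          · ring
          · ring
      have hC : ZZ q K (min (k + 2 - l) k) (M - 1 - 2 * n) (P - l + 1 - k * n) =
          ZZ q K (k + 1 - l) (M - 1 - 2 * n) (P - l + 1 - k * n) +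
          q ^ (P - l + 1 - k * n) *
            ZZ q K (l - 1) (M - 2 * ((n + 1 : ℕ) : ℤ)) (P - k * ((n + 1 : ℕ) : ℤ)) := by
        by_cases hl : l = 1
        · subst hl
          rw [min_eq_right (by omega)]
          simp [ZZ_l0]
        · rw [min_eq_left (by omega)]
          have := ext (k + 2 - l) (M - 1 - 2 * n) (P - l + 1 - k * n) (by omega) (by omega) (by
            rintro ⟨ha, hb⟩
            have : m = - l + 1 := by
              rw [hm]; linear_combination k * ha - 2 * hb
            omega)
          unfold ZRec at this
          rw [this, hk3]
          congr 2
          · ring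
          congr 1
          · ring
          · push_cast; ring
          · push_cast; ring
      have hP : gg q m n = (if n = 0 then 0 else gg q m (n - 1)) + q ^ (n : ℤ) * gg q (m - 1) n ∨
          ZZ q K (l - 1) (M - 2 * n) (P - k * n) = 0 := by
        rcases n with _ | n
        · by_cases hm0 : m = 0
          · right
            apply ZZ_big
            have : k * M = K * M + M := by rw [hk]; ring
            push_cast
            simp
            linarith
          · left
            rw [gg_pascal0 q hm0]; simp
        · left
          rw [gg_pascal q hq]; simp; ring
      have z1 : q ^ (2 * (n : ℤ) * P - k * (n : ℤ) ^ 2 + (k + 1 - (l - 1)) * n) =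
          q ^ (2 * (n : ℤ) * P - k * (n : ℤ) ^ 2 + (k + 1 - l) * n) * q ^ (n : ℤ) := by
        rw [← zpow_add₀ hq]; congr 1; ring
      have z2 : q ^ P * q ^ (2 * (n : ℤ) * (P - l + 1) - k * (n : ℤ) ^ 2 +
            (k + 1 - (k + 2 - l)) * n) =
          q ^ (2 * (n : ℤ) * P - k * (n : ℤ) ^ 2 + (k + 1 - l) * n) * q ^ (P - k * n) := by
        rw [← zpow_add₀ hq, ← zpow_add₀ hq]; congr 1; ring
      have z3 : q ^ P * q ^ (2 * (n : ℤ) * (P - l + 1) - k * (n : ℤ) ^ 2 +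
            (k + 1 - (k + 2 - l)) * n) * q ^ (P - l + 1 - k * n) =
          q ^ (2 * ((n + 1 : ℕ) : ℤ) * P - k * ((n + 1 : ℕ) : ℤ) ^ 2
            + (k + 1 - l) * ((n + 1 : ℕ) : ℤ)) := by
        rw [← zpow_add₀ hq, ← zpow_add₀ hq]; congr 1; push_cast; ring
      rw [ht]
      simp only [Nat.succ_ne_zero, if_false, Nat.add_sub_cancel]
      rw [← z3, z1, hA, hC]
      generalize q ^ (2 * (n : ℤ) * P - k * (n : ℤ) ^ 2 + (k + 1 - l) * n) = c at *
      generalize q ^ (2 * (n : ℤ) * (P - l + 1) - k * (n : ℤ) ^ 2 +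
            (k + 1 - (k + 2 - l)) * n) = c' at *
      generalize ZZ q K (l - 1) (M - 2 * n) (P - k * n) = B at *
      generalize ZZ q K (k + 1 - l) (M - 1 - 2 * n) (P - l + 1 - k * n) = D at *
      rcases hP with hP | hP
      · linear_combination (-(D * gg q m n)) * z2 + c * B * hP
      · rw [hP]
        linear_combination (-(D * gg q m n)) * z2
  have hsum := Finset.sum_congr (rfl : Finset.range N = Finset.range N) (fun n _ => key n)
  rw [Finset.sum_range_sub', Finset.sum_sub_distrib, Finset.sum_sub_distrib,
    ← Finset.mul_sum] at hsum
  have t0 : t 0 = 0 := by rw [ht]; simp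
  have tN : t N = 0 := by
    rw [ht]
    simp only
    rw [ZZ_negP q K _ _ _ (by nlinarith)]
    simp
  rw [t0, tN] at hsum
  linear_combination hsum

lemma ZRec_all (q : ℂ) (hq : q ≠ 0) : ∀ (K : ℕ) (l M P : ℤ), 1 ≤ l → l ≤ K + 1 → 1 ≤ M →
    ZRec q K l M P
  | 0, l, M, P, h1, h2, hM => by
    have : l = 1 := by simp at h2; omega
    subst this
    unfold ZRec
    simp only [ZZ]
    by_cases hP : P = 0
    · subst hP
      simp
      rw [if_pos (by omega), if_pos (by omega)]
    · simp [hP]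
  | K + 1, l, M, P, h1, h2, hM =>
    ZRec_step q hq K (ZRec_all q hq K) l M P h1 (by push_cast at h2; omega) hM

lemma ZZ_iter (q : ℂ) (hq : q ≠ 0) (K : ℕ) (M P : ℤ) (hM : 1 ≤ M) : ∀ l : ℕ, l ≤ K + 1 →
    ZZ q K l M P = ∑ a ∈ Finset.range l, q ^ P * ZZ q K (K + 1 - a) (M - 1) (P - a)
  | 0, _ => by simp [ZZ_l0]
  | l + 1, h => by
    have := ZRec_all q hq K ((l + 1 : ℕ) : ℤ) M P (by omega) (by omega) hM
    unfold ZRec at this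
    rw [this, Finset.sum_range_succ, ← ZZ_iter q hq K M P hM l (by omega)]
    congr 2
    · push_cast; simp
    · congr 1
      · push_cast; ring
      · push_cast; ring

/-! ### The partition side -/

lemma ite_iff_congr {p r : Prop} {dp : Decidable p} {dr : Decidable r} {a b c : ℂ}
    (h : p ↔ r) (h' : a = b) : @ite _ p dp a c = @ite _ r dr b c := by
  subst h'
  by_cases hp : p
  · rw [if_pos hp, if_pos (h.mp hp)]
  · rw [if_neg hp, if_neg (fun hr => hp (h.mpr hr))]

lemma sum_Icc_one {A : Type*} [AddCommMonoid A] (h : ℕ → A) (M : ℕ) :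
    ∑ j ∈ Finset.Icc 1 M, h j = ∑ i ∈ Finset.range M, h (i + 1) := by
  induction M with
  | zero => simp
  | succ M ih => rw [Finset.sum_Icc_succ_top (by omega), ih, Finset.sum_range_succ]

lemma fval_cons_one (M B : ℕ) (a : Fin B) (g : Fin M → Fin B) :
    fval (M + 2) B (Fin.cons a g : Fin (M + 1) → Fin B) 1 = a := by
  unfold fval
  rw [dif_pos (by omega)]
  rfl

lemma fval_cons_succ (M B : ℕ) (a : Fin B) (g : Fin M → Fin B) (j : ℕ) :
    fval (M + 2) B (Fin.cons a g : Fin (M + 1) → Fin B) (j + 2) = fval (M + 1) B g (j + 1) := by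
  unfold fval
  by_cases h : j < M
  · rw [dif_pos (by omega), dif_pos (by omega)]
    rfl
  · rw [dif_neg (by omega), dif_neg (by omega)]

def SOk (K B M l : ℕ) (g : Fin M → Fin B) : Prop :=
  fval (M + 1) B g 1 ≤ l - 1 ∧
    ∀ j ∈ Finset.Icc 1 (M - 1), fval (M + 1) B g j + fval (M + 1) B g (j + 1) ≤ K

def SS (q : ℂ) (K B M l : ℕ) (x : ℂ) : ℂ :=
  ∑ g : Fin M → Fin B, if SOk K B M l g then
    q ^ (∑ j ∈ Finset.Icc 1 M, j * fval (M + 1) B g j) *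
      x ^ (∑ j ∈ Finset.Icc 1 M, fval (M + 1) B g j) else 0

lemma SOk_cons (K B M l : ℕ) (hl : 1 ≤ l) (hlK : l ≤ K + 1) (a : Fin B) (g : Fin M → Fin B) :
    SOk K B (M + 1) l (Fin.cons a g : Fin (M + 1) → Fin B) ↔
      (a : ℕ) < l ∧ SOk K B M (K + 1 - a) g := by
  unfold SOk
  rw [fval_cons_one]
  constructor
  · rintro ⟨h1, h2⟩
    refine ⟨by omega, ?_, ?_⟩
    · rcases M with _ | M
      · simp [fval]
      · have := h2 1 (by simp)
        rw [fval_cons_one, fval_cons_succ M.succ B a g 0] at this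
        simp at this ⊢
        omega
    · intro j hj
      simp only [Finset.mem_Icc] at hj
      have := h2 (j + 1) (by simp only [Finset.mem_Icc]; omega)
      obtain ⟨i, rfl⟩ : ∃ i, j = i + 1 := ⟨j - 1, by omega⟩
      rw [fval_cons_succ, fval_cons_succ M B a g (i + 1)] at this
      exact this
  · rintro ⟨h1, h2, h3⟩
    refine ⟨by omega, ?_⟩
    intro j hj
    simp only [Finset.mem_Icc] at hj
    obtain ⟨i, rfl⟩ : ∃ i, j = i + 1 := ⟨j - 1, by omega⟩
    rcases i with _ | i
    · rw [fval_cons_one, fval_cons_succ M B a g 0]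
      simp at h2 ⊢
      omega
    · rw [fval_cons_succ, fval_cons_succ M B a g (i + 1)]
      exact h3 (i + 1) (by simp only [Finset.mem_Icc]; omega)

lemma SS_succ (q : ℂ) (K B M l : ℕ) (hl : 1 ≤ l) (hlK : l ≤ K + 1) (hB : K < B) (x : ℂ) :
    SS q K B (M + 1) l x =
      ∑ a ∈ Finset.range l, (x * q) ^ a * SS q K B M (K + 1 - a) (x * q) := by
  unfold SS
  rw [← (Fin.consEquiv (fun _ : Fin (M + 1) => Fin B)).sum_comp, Fintype.sum_prod_type]
  have key : ∀ a : Fin B, (∑ g : Fin M → Fin B,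
      if SOk K B (M + 1) l (Fin.cons a g : Fin (M + 1) → Fin B) then
        q ^ (∑ j ∈ Finset.Icc 1 (M + 1),
          j * fval (M + 2) B (Fin.cons a g : Fin (M + 1) → Fin B) j) *
        x ^ (∑ j ∈ Finset.Icc 1 (M + 1),
          fval (M + 2) B (Fin.cons a g : Fin (M + 1) → Fin B) j) else 0) =
      (fun a : ℕ => if a < l then (x * q) ^ a * SS q K B M (K + 1 - a) (x * q) else 0) (a : ℕ) := by
    intro a
    simp only [SOk_cons K B M l hl hlK]
    by_cases ha : (a : ℕ) < l
    · simp only [ha, true_and, if_true]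
      unfold SS
      rw [Finset.mul_sum]
      apply Finset.sum_congr rfl
      intro g _
      by_cases hS : SOk K B M (K + 1 - a) g
      · rw [if_pos hS, if_pos hS]
        simp only [sum_Icc_one]
        rw [Finset.sum_range_succ', Finset.sum_range_succ']
        simp only [zero_add, fval_cons_one, fval_cons_succ, one_mul]
        have : ∑ i ∈ Finset.range M, (i + 1 + 1) * fval (M + 1) B g (i + 1) =
          ∑ i ∈ Finset.range M, (i + 1) * fval (M + 1) B g (i + 1)
            + ∑ i ∈ Finset.range M, fval (M + 1) B g (i + 1) := by
          rw [← Finset.sum_add_distrib]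
          apply Finset.sum_congr rfl
          intro i _
          ring
        rw [this, mul_pow, mul_pow]
        ring
      · rw [if_neg hS, if_neg hS]; simp
    · simp [ha]
  have := Finset.sum_congr (rfl : (Finset.univ : Finset (Fin B)) = Finset.univ) (fun a _ => key a)
  refine this.trans ?_
  rw [Fin.sum_univ_eq_sum_range
    (fun a : ℕ => if a < l then (x * q) ^ a * SS q K B M (K + 1 - a) (x * q) else 0) B]
  rw [← Finset.sum_filter]
  apply Finset.sum_congr
  · ext a
    simp only [Finset.mem_filter, Finset.mem_range]
    omega
  · intro a _
    rfl

lemma SS_eq (q : ℂ) (hq : q ≠ 0) (K B : ℕ) (hB : K < B) : ∀ (M l : ℕ) (x : ℂ) (N : ℕ),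
    1 ≤ l → l ≤ K + 1 → K * (M + 1) < N →
    SS q K B M l x = ∑ P ∈ Finset.range N, ZZ q K l M P * x ^ P
  | 0, l, x, N, hl, hlK, hN => by
    rw [Finset.sum_eq_single 0]
    · simp only [Nat.cast_zero]
      rw [ZZ_M0 q K _ _ (by omega)]
      unfold SS
      rw [Fintype.sum_unique, if_pos]
      · simp
      · unfold SOk
        constructor
        · simp [fval]
        · intro j hj
          simp at hj
    · intro P _ hP
      simp only [Nat.cast_zero]
      rw [ZZ_M0 q K _ _ (by omega), if_neg (by omega)]
      simp
    · intro h
      simp at h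
      omega
  | M + 1, l, x, N, hl, hlK, hN => by
    rw [SS_succ q K B M l hl hlK hB]
    have h1 : ∀ P ∈ Finset.range N, ZZ q K l ((M + 1 : ℕ) : ℤ) P * x ^ P =
        ∑ a ∈ Finset.range l, (x * q) ^ P * ZZ q K (K + 1 - a) M ((P : ℤ) - a) := by
      intro P _
      rw [ZZ_iter q hq K _ _ (by omega) l hlK, Finset.sum_mul]
      apply Finset.sum_congr rfl
      intro a _
      rw [zpow_natCast, mul_pow]
      push_cast
      rw [add_sub_cancel_right]
      ring
    rw [Finset.sum_congr rfl h1, Finset.sum_comm]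
    apply Finset.sum_congr rfl
    intro a ha
    simp only [Finset.mem_range] at ha
    have hN' : K * (M + 1) < N - a := by
      have : K * (M + 1 + 1) = K * (M + 1) + K := by ring
      omega
    rw [SS_eq q hq K B hB M (K + 1 - a) (x * q) (N - a) (by omega) (by omega) hN']
    have : N = a + (N - a) := by omega
    conv_rhs => rw [this, Finset.sum_range_add]
    rw [Finset.sum_eq_zero (s := Finset.range a), zero_add, Finset.mul_sum]
    · apply Finset.sum_congr rfl
      intro P _
      rw [pow_add]
      have e1 : ((K + 1 - a : ℕ) : ℤ) = (K : ℤ) + 1 - a := by omega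
      have e2 : ((a + P : ℕ) : ℤ) - a = P := by omega
      rw [e1, e2]
      ring
    · intro P hP
      simp only [Finset.mem_range] at hP
      rw [ZZ_negP q K _ _ _ (by omega)]
      simp

lemma Gpoly_eq (q : ℂ) (K l M : ℕ) (hl : 1 ≤ l) (hlK : l ≤ K + 1) :
    Gpoly K l (K + 1) (M + 1) q = SS q K (K + l + (K + 1)) M l 1 := by
  unfold Gpoly SS
  rw [Finset.sum_filter]
  apply Finset.sum_congr rfl
  intro g _
  simp only [one_pow, mul_one]
  refine ite_iff_congr ?_ rfl
  unfold SOk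
  simp only [Nat.add_sub_cancel]
  constructor
  · rintro ⟨h1, _, h3⟩
    exact ⟨h1, h3⟩
  · rintro ⟨h1, h3⟩
    refine ⟨h1, ?_, h3⟩
    rcases M with _ | _ | M
    · simp [fval]
    · simp at h1 ⊢
      omega
    · have := h3 (M + 1) (by simp)
      simp at this ⊢
      omega

/-! ### The chain side -/

def ch {K B : ℕ} (n : ℕ) (f : Fin K → Fin B) (j : ℕ) : ℕ :=
  if h : 1 ≤ j ∧ j ≤ K then (f ⟨j - 1, by omega⟩ : ℕ) else if j = 0 then 0 else n

lemma ch_snoc {K B : ℕ} (n : ℕ) (f : Fin K → Fin B) (a : Fin B) (j : ℕ) (hj : j ≤ K + 1) :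
    ch n (Fin.snoc f a : Fin (K + 1) → Fin B) j = ch (a : ℕ) f j := by
  unfold ch
  rcases j with _ | j
  · simp
  · rw [dif_pos (by omega)]
    by_cases h : j < K
    · rw [dif_pos (by omega)]
      simp [Fin.snoc, h]
    · rw [dif_neg (by omega)]
      simp [Fin.snoc, h]

lemma ch_last {K B : ℕ} (n : ℕ) (f : Fin K → Fin B) : ch n f (K + 1) = n := by
  unfold ch
  rw [dif_neg (by omega), if_neg (by omega)]

def tm (q : ℂ) (l b : ℕ) (c : ℕ → ℕ) (j : ℕ) : ℂ :=
  q⁻¹ ^ (c j ^ 2 + (1 - b) * c j) *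
    gaussP q⁻¹
      ((c (j + 1) : ℤ) - (c j : ℤ) - (b : ℤ) * (j : ℤ)
        + ∑ r ∈ Finset.Icc 1 j, (2 * (c r : ℤ) + if r < l then 1 else 0))
      ((c (j + 1) : ℤ) - (c j : ℤ))

def TT (q : ℂ) (l b B K n : ℕ) (w : ℤ → ℂ) : ℂ :=
  ∑ f : Fin K → Fin B, if ∀ j ∈ Finset.Icc 1 K, ch n f j ≤ ch n f (j + 1) then
    (∏ j ∈ Finset.Icc 1 K, tm q l b (ch n f) j) * w (∑ j ∈ Finset.Icc 1 K, (ch n f j : ℤ)) else 0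

lemma sum_chi (l : ℕ) (hl : 1 ≤ l) (j : ℕ) :
    ∑ r ∈ Finset.Icc 1 j, (if r < l then (1 : ℤ) else 0) = min (l : ℤ) ((j : ℤ) + 1) - 1 := by
  induction j with
  | zero => simp; omega
  | succ j ih =>
    rw [Finset.sum_Icc_succ_top (by omega), ih]
    push_cast
    split_ifs <;> omega

lemma TT_succ (q : ℂ) (l b B K n : ℕ) (hl : 1 ≤ l) (hn : n < B) (w : ℤ → ℂ) :
    TT q l b B (K + 1) n w = ∑ a ∈ Finset.range (n + 1), TT q l b B K a (fun s =>
      q⁻¹ ^ (a ^ 2 + (1 - b) * a) *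
        gaussP q⁻¹ ((n : ℤ) - a - b * (K + 1) + 2 * (s + a) + (min (l : ℤ) ((K : ℤ) + 2) - 1))
          ((n : ℤ) - a) * w (s + a)) := by
  conv_lhs => unfold TT
  rw [← (Fin.snocEquiv (fun _ : Fin (K + 1) => Fin B)).sum_comp, Fintype.sum_prod_type]
  have key : ∀ a : Fin B, (∑ f : Fin K → Fin B,
      if ∀ j ∈ Finset.Icc 1 (K + 1), ch n (Fin.snoc f a : Fin (K + 1) → Fin B) j ≤
          ch n (Fin.snoc f a : Fin (K + 1) → Fin B) (j + 1) then
        (∏ j ∈ Finset.Icc 1 (K + 1), tm q l b (ch n (Fin.snoc f a : Fin (K + 1) → Fin B)) j) *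
        w (∑ j ∈ Finset.Icc 1 (K + 1), (ch n (Fin.snoc f a : Fin (K + 1) → Fin B) j : ℤ)) else 0) =
      (fun a : ℕ => if a < n + 1 then TT q l b B K a (fun s =>
      q⁻¹ ^ (a ^ 2 + (1 - b) * a) *
        gaussP q⁻¹ ((n : ℤ) - a - b * (K + 1) + 2 * (s + a) + (min (l : ℤ) ((K : ℤ) + 2) - 1))
          ((n : ℤ) - a) * w (s + a)) else 0) (a : ℕ) := by
    intro a
    have hc : ∀ f : Fin K → Fin B,
        (∀ j ∈ Finset.Icc 1 (K + 1), ch n (Fin.snoc f a : Fin (K + 1) → Fin B) j ≤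
          ch n (Fin.snoc f a : Fin (K + 1) → Fin B) (j + 1)) ↔
        ((a : ℕ) < n + 1 ∧ ∀ j ∈ Finset.Icc 1 K, ch (a : ℕ) f j ≤ ch (a : ℕ) f (j + 1)) := by
      intro f
      constructor
      · intro h
        constructor
        · have := h (K + 1) (by simp)
          rw [ch_snoc n f a (K + 1) le_rfl, ch_last, ch_last] at this
          omega
        · intro j hj
          simp only [Finset.mem_Icc] at hj
          have := h j (by simp only [Finset.mem_Icc]; omega)
          rwa [ch_snoc n f a j (by omega), ch_snoc n f a (j + 1) (by omega)] at this
      · rintro ⟨h1, h2⟩ j hj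
        simp only [Finset.mem_Icc] at hj
        rw [ch_snoc n f a j (by omega)]
        by_cases hjK : j = K + 1
        · subst hjK
          rw [ch_last, ch_last]
          omega
        · rw [ch_snoc n f a (j + 1) (by omega)]
          exact h2 j (by simp only [Finset.mem_Icc]; omega)
    simp only [hc]
    by_cases ha : (a : ℕ) < n + 1
    · simp only [ha, true_and, if_true]
      unfold TT
      apply Finset.sum_congr rfl
      intro f _
      refine ite_iff_congr Iff.rfl ?_
      rw [Finset.prod_Icc_succ_top (by omega)]
      have hS : ∑ j ∈ Finset.Icc 1 (K + 1), (ch n (Fin.snoc f a : Fin (K + 1) → Fin B) j : ℤ) =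
          ∑ j ∈ Finset.Icc 1 K, (ch (a : ℕ) f j : ℤ) + (a : ℕ) := by
        rw [Finset.sum_Icc_succ_top (by omega), ch_snoc n f a (K + 1) le_rfl, ch_last]
        congr 1
        apply Finset.sum_congr rfl
        intro j hj
        simp only [Finset.mem_Icc] at hj
        rw [ch_snoc n f a j (by omega)]
      have hp : ∏ j ∈ Finset.Icc 1 K, tm q l b (ch n (Fin.snoc f a : Fin (K + 1) → Fin B)) j =
          ∏ j ∈ Finset.Icc 1 K, tm q l b (ch (a : ℕ) f) j := by
        apply Finset.prod_congr rfl
        intro j hj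
        simp only [Finset.mem_Icc] at hj
        unfold tm
        rw [ch_snoc n f a j (by omega), ch_snoc n f a (j + 1) (by omega)]
        have : ∑ r ∈ Finset.Icc 1 j, (2 * (ch n (Fin.snoc f a : Fin (K + 1) → Fin B) r : ℤ) +
            if r < l then 1 else 0) =
            ∑ r ∈ Finset.Icc 1 j, (2 * (ch (a : ℕ) f r : ℤ) + if r < l then 1 else 0) := by
          apply Finset.sum_congr rfl
          intro r hr
          simp only [Finset.mem_Icc] at hr
          rw [ch_snoc n f a r (by omega)]
        rw [this]
      rw [hp, hS]
      have ht : tm q l b (ch n (Fin.snoc f a : Fin (K + 1) → Fin B)) (K + 1) =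
          q⁻¹ ^ ((a : ℕ) ^ 2 + (1 - b) * (a : ℕ)) *
          gaussP q⁻¹ ((n : ℤ) - (a : ℕ) - b * (K + 1) +
            2 * (∑ j ∈ Finset.Icc 1 K, (ch (a : ℕ) f j : ℤ) + (a : ℕ))
              + (min (l : ℤ) ((K : ℤ) + 2) - 1)) ((n : ℤ) - (a : ℕ)) := by
        unfold tm
        rw [Finset.sum_add_distrib, ← Finset.mul_sum, hS, sum_chi l hl,
          ch_snoc n f a (K + 1) le_rfl, ch_last, ch_last]
        push_cast
        congr 2
        rw [show (K : ℤ) + 1 + 1 = K + 2 by ring]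
        ring
      rw [ht]
      ring
    · simp [ha]
  have := Finset.sum_congr (rfl : (Finset.univ : Finset (Fin B)) = Finset.univ) (fun a _ => key a)
  refine this.trans ?_
  rw [Fin.sum_univ_eq_sum_range (fun a : ℕ => if a < n + 1 then TT q l b B K a (fun s =>
      q⁻¹ ^ (a ^ 2 + (1 - b) * a) *
        gaussP q⁻¹ ((n : ℤ) - a - b * (K + 1) + 2 * (s + a) + (min (l : ℤ) ((K : ℤ) + 2) - 1))
          ((n : ℤ) - a) * w (s + a)) else 0) B]
  rw [← Finset.sum_filter]
  apply Finset.sum_congr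
  · ext a
    simp only [Finset.mem_filter, Finset.mem_range]
    omega
  · intro a _
    rfl

lemma TT_eq (q : ℂ) (hq : q ≠ 0) (l b B : ℕ) (hl : 1 ≤ l) (hb : b ≤ 1) :
    ∀ (K n : ℕ) (w : ℤ → ℂ) (N : ℕ), n < B → K * n < N →
    TT q l b B K n w = ∑ P ∈ Finset.range N,
      q ^ (-((K : ℤ) * ((n : ℤ) ^ 2 + (1 - (b : ℤ)) * n))) *
        ZZ q K (min (l : ℤ) ((K : ℤ) + 1)) (2 * n - b) P * w ((K : ℤ) * n - P)
  | 0, n, w, N, hn, hN => by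
    rw [Finset.sum_eq_single 0]
    · unfold TT
      rw [Fintype.sum_unique, if_pos]
      · rw [ZZ, if_pos]
        · simp
        · refine ⟨by simp, by omega, ?_⟩
          simp
          omega
      · intro j hj
        simp at hj
    · intro P _ hP
      rw [ZZ, if_neg (by omega)]
      simp
    · intro h
      simp at h
      omega
  | K + 1, n, w, N, hn, hN => by
    rw [TT_succ q l b B K n hl hn, ← Finset.sum_flip]
    have hexp : (K + 1) * n = K * n + n := by ring
    have hnN : n < N := by
      have := Nat.zero_le (K * n)
      omega
    have h1 : ∀ P ∈ Finset.range N,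
        q ^ (-(((K + 1 : ℕ) : ℤ) * ((n : ℤ) ^ 2 + (1 - (b : ℤ)) * n))) *
        ZZ q (K + 1) (min (l : ℤ) (((K + 1 : ℕ) : ℤ) + 1)) (2 * n - b) P *
          w (((K + 1 : ℕ) : ℤ) * n - P) =
        ∑ v ∈ Finset.range (n + 1),
          q ^ (-(((K : ℤ) + 1) * ((n : ℤ) ^ 2 + (1 - (b : ℤ)) * n))) *
          (q ^ (2 * (v : ℤ) * P - ((K : ℤ) + 1) * (v : ℤ) ^ 2
              + ((K : ℤ) + 2 - min (l : ℤ) ((K : ℤ) + 2)) * v) *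
            ZZ q K (min (l : ℤ) ((K : ℤ) + 1)) (2 * n - b - 2 * v) (P - ((K : ℤ) + 1) * v) *
            gg q (((K : ℤ) + 1) * (2 * n - b) - 2 * P + min (l : ℤ) ((K : ℤ) + 2) - 1) v) *
          w (((K : ℤ) + 1) * n - P) := by
      intro P hP
      simp only [Finset.mem_range] at hP
      rw [ZZ_range q K _ _ _ N (by omega)]
      push_cast
      rw [show (K : ℤ) + 1 + 1 = K + 2 by ring]
      have hmm : min (min (l : ℤ) ((K : ℤ) + 2)) ((K : ℤ) + 1) = min (l : ℤ) ((K : ℤ) + 1) := by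
        omega
      rw [hmm, ← Finset.sum_mul, ← Finset.mul_sum]
      congr 2
      symm
      apply Finset.sum_subset
      · intro v hv
        simp only [Finset.mem_range] at *
        omega
      · intro v _ hv
        simp only [Finset.mem_range] at hv
        rw [ZZ_negM q K _ _ _ (by omega)]
        simp
    rw [Finset.sum_congr rfl h1, Finset.sum_comm]
    apply Finset.sum_congr rfl
    intro v hv
    simp only [Finset.mem_range] at hv
    obtain ⟨u, rfl⟩ : ∃ u, n = v + u := ⟨n - v, by omega⟩
    rw [Nat.add_sub_cancel_left]
    obtain ⟨N', rfl⟩ : ∃ N', N = (K + 1) * v + N' := by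
      refine ⟨N - (K + 1) * v, ?_⟩
      have : (K + 1) * (v + u) = (K + 1) * v + (K + 1) * u := by ring
      omega
    have hN' : K * u < N' := by
      have : (K + 1) * (v + u) = (K + 1) * v + K * u + u := by ring
      omega
    rw [TT_eq q hq l b B hl hb K u _ N' (by omega) hN', Finset.sum_range_add,
      Finset.sum_eq_zero (s := Finset.range ((K + 1) * v)), zero_add]
    · apply Finset.sum_congr rfl
      intro P _
      unfold gg
      push_cast
      have a1 : 2 * ((v : ℤ) + u) - b - 2 * v = 2 * u - b := by ring
      have a2 : ((K : ℤ) + 1) * v + P - (K + 1) * v = P := by ring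
      have a3 : ((v : ℤ) + u) - u - b * (K + 1) + 2 * (K * u - P + u) +
          (min (l : ℤ) ((K : ℤ) + 2) - 1) = v + (((K : ℤ) + 1) * (2 * (v + u) - b)
            - 2 * ((K + 1) * v + P) + min (l : ℤ) ((K : ℤ) + 2) - 1) := by ring
      have a4 : ((v : ℤ) + u) - u = v := by ring
      have a5 : (K : ℤ) * u - P + u = (K + 1) * (v + u) - ((K + 1) * v + P) := by ring
      rw [a1, a2, a3, a4, a5]
      have hz : q ^ (-((K : ℤ) * ((u : ℤ) ^ 2 + (1 - (b : ℤ)) * u))) *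
          q⁻¹ ^ (u ^ 2 + (1 - b) * u) =
          q ^ (-(((K : ℤ) + 1) * (((v : ℤ) + u) ^ 2 + (1 - (b : ℤ)) * (v + u)))) *
          q ^ (2 * (v : ℤ) * ((K + 1) * v + P) - ((K : ℤ) + 1) * (v : ℤ) ^ 2
              + ((K : ℤ) + 2 - min (l : ℤ) ((K : ℤ) + 2)) * v) *
          q ^ ((v : ℤ) * (((K : ℤ) + 1) * (2 * (v + u) - b)
            - 2 * ((K + 1) * v + P) + min (l : ℤ) ((K : ℤ) + 2) - 1)) := by
        rw [inv_pow, ← zpow_natCast, ← zpow_neg, ← zpow_add₀ hq, ← zpow_add₀ hq, ← zpow_add₀ hq]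
        congr 1
        rw [Nat.cast_add, Nat.cast_mul, Nat.cast_sub hb]
        push_cast
        ring
      linear_combination (ZZ q K (min (l : ℤ) ((K : ℤ) + 1)) (2 * u - b) P *
        gaussP q⁻¹ (v + (((K : ℤ) + 1) * (2 * (v + u) - b)
            - 2 * ((K + 1) * v + P) + min (l : ℤ) ((K : ℤ) + 2) - 1)) v *
        w ((K + 1) * (v + u) - ((K + 1) * v + P))) * hz
    · intro P hP
      simp only [Finset.mem_range] at hP
      have : (P : ℤ) < ((K : ℤ) + 1) * v := by exact_mod_cast hP
      rw [ZZ_negP q K _ _ _ (by omega)]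
      simp

lemma HpolyP_eq (q : ℂ) (K l b n : ℕ) :
    HpolyP (K + 1) l b q⁻¹ n = TT q l b (n + 1) K n (fun _ => 1) := by
  unfold HpolyP TT
  rw [Finset.sum_filter]
  apply Finset.sum_congr rfl
  intro f _
  have hch : ∀ j, chainN (K + 1) n f j = ch n f j := fun j => rfl
  refine ite_iff_congr ?_ ?_
  · constructor
    · intro h j hj
      simp only [Finset.mem_Icc] at hj
      unfold ch
      rw [dif_pos (by omega)]
      by_cases hjK : j + 1 ≤ K
      · rw [dif_pos (by omega)]
        exact h _ _ (by simp [Fin.le_def])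
      · rw [dif_neg (by omega), if_neg (by omega)]
        exact Nat.lt_succ_iff.mp (f _).2
    · intro h
      have hd : ∀ d i : ℕ, 1 ≤ i → i + d ≤ K → ch n f i ≤ ch n f (i + d) := by
        intro d
        induction d with
        | zero => intro i _ _; exact le_rfl
        | succ d ih =>
          intro i h1 h2
          exact (ih i h1 (by omega)).trans
            (h (i + d) (by simp only [Finset.mem_Icc]; omega))
      intro i j hij
      have hj : (j : ℕ) < K := j.2
      have hij' : (i : ℕ) ≤ j := hij
      have := hd (j - i) (i + 1) (by omega) (by omega)
      rw [show (i : ℕ) + 1 + (j - i) = j + 1 by omega] at this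
      unfold ch at this
      rw [dif_pos (by omega), dif_pos (by omega)] at this
      exact this
  · rw [mul_one]
    rfl

/-- Equation (1.3): `H_n(k,ℓ;b;q⁻¹) = q^{(k-1)bn - (k-1)n(n+1)} G_{k-1,ℓ,k,2n-b+1}(q)`,
as an identity for every nonzero complex `q`. -/
theorem statement10 (k ℓ b n : ℕ) (hk : 1 ≤ k) (hℓ : 1 ≤ ℓ) (hℓk : ℓ ≤ k)
    (hb : b = 0 ∨ b = 1) (hn : b ≤ n) (q : ℂ) (hq : q ≠ 0) :
    HpolyP k ℓ b q⁻¹ n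
      = q ^ (((k : ℤ) - 1) * (b : ℤ) * (n : ℤ) - ((k : ℤ) - 1) * (n : ℤ) * ((n : ℤ) + 1)) *
        Gpoly (k - 1) ℓ k (2 * n - b + 1) q := by
  obtain ⟨K, rfl⟩ : ∃ K, k = K + 1 := ⟨k - 1, by omega⟩
  have hb1 : b ≤ 1 := by omega
  rw [HpolyP_eq, Nat.add_sub_cancel, Gpoly_eq q K ℓ (2 * n - b) hℓ hℓk]
  have hN1 : K * n < K * (2 * n + 1) + 1 := by nlinarith
  have hN2 : K * (2 * n - b + 1) < K * (2 * n + 1) + 1 := by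
    have : K * (2 * n - b + 1) ≤ K * (2 * n + 1) := Nat.mul_le_mul_left K (by omega)
    omega
  rw [TT_eq q hq ℓ b (n + 1) hℓ hb1 K n _ _ (by omega) hN1,
    SS_eq q hq K _ (by omega) (2 * n - b) ℓ 1 _ hℓ hℓk hN2, Finset.mul_sum]
  apply Finset.sum_congr rfl
  intro P _
  rw [min_eq_left (by omega)]
  have e1 : ((2 * n - b : ℕ) : ℤ) = 2 * n - b := by omega
  rw [e1]
  have e2 : -((K : ℤ) * ((n : ℤ) ^ 2 + (1 - (b : ℤ)) * n)) =
      (((K + 1 : ℕ) : ℤ) - 1) * b * n - (((K + 1 : ℕ) : ℤ) - 1) * n * (n + 1) := by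
    push_cast; ring
  rw [e2]
  ring
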